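/- For every d ≥ 5 there exists a finite union of unit cubes E ⊆ ℝ^d (cubes placed at integer points), such that E tiles ℝ^d by translations but E is not a spectral set; similarly there exists a finite subset of ℤ^d that tiles ℤ^d by translations but is not spectral in ℤ^d. This disproves the 'tiling ⇒ spectral' direction of Fuglede's Spectral Set Conjecture in dimensions d ≥ 5. -/

import Mathlib

open scoped BigOperators
open Complex Real MeasureTheory

/-- A finite set `B ⊆ ℤ^d` is spectral in `ℤ^d` if there is a set `S` of frequencies
(in `ℝ^d`, thought of mod 1, i.e. in `𝕋^d`) with `#S = #B` and `χ̂_B(s - s') = 0` for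
all distinct `s, s' ∈ S`. -/
def SpectralZd {d : ℕ} (B : Finset (Fin d → ℤ)) : Prop :=
  ∃ S : Finset (Fin d → ℝ), S.card = B.card ∧
    ∀ s ∈ S, ∀ s' ∈ S, s ≠ s' →
      ∑ b ∈ B, Complex.exp (2 * π * Complex.I * (∑ j, (s j - s' j) * (b j : ℝ) : ℝ)) = 0

/-- The Fourier transform of the indicator of a set `E ⊆ ℝ^d` at frequency `ξ`. -/
noncomputable def ftInd {d : ℕ} (E : Set (Fin d → ℝ)) (ξ : Fin d → ℝ) : ℂ :=
  ∫ x in E, Complex.exp (2 * π * Complex.I * (∑ j, ξ j * x j : ℝ))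

/-- `E ⊆ ℝ^d` is spectral: some (countable) set `S` of exponentials forms an orthogonal
basis of `L²(E)`; equivalently `∑_{s∈S} |χ̂_E(x - s)|² = |E|²` for a.e. `x`. -/
def SpectralRd {d : ℕ} (E : Set (Fin d → ℝ)) : Prop :=
  ∃ S : Set (Fin d → ℝ), S.Countable ∧
    ∀ᵐ x : Fin d → ℝ,
      ∑' s : S, ‖ftInd E (x - (s : Fin d → ℝ))‖ ^ 2 = ((volume E).toReal) ^ 2

/-- The union of unit cubes placed at the integer points of `A`. -/
def cubes {d : ℕ} (A : Finset (Fin d → ℤ)) : Set (Fin d → ℝ) :=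
  {x : Fin d → ℝ | ∃ a ∈ A, ∀ j, (a j : ℝ) ≤ x j ∧ x j < (a j : ℝ) + 1}

/-!
Over `(ℤ/6)⁵`, a bijection `σ` from the five coordinates to the nonzero residues modulo `6` gives
a homomorphism `w ↦ ∑ j, σ(j) w_j` onto `ℤ/6`, whose kernel is complemented by `{0, e₁, …, e₅}`.
Placing one such kernel on each layer of `(ℤ/6)⁵ × ℤ/121`, so that every `σ` occurs, gives a tile.
Its Fourier transform at a cubic character (one with values in the cube roots of unity) cannot
vanish if that character is trivial on some layer, and this is the case for all differences of the
six characters read off a `6 × 6` complex Hadamard matrix of cube roots of unity. Hence for any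
set of frequencies that is orthogonal on the tile, its translates by these six characters are
disjoint, so a coset of the `3⁵` cubic characters contains at most `⌊243 / 6⌋ = 40` frequencies,
while a spectrum would have `243 / 6` of them per coset on average.

The pull-back of the tile to `ℤ^d`, cut off to a box of `k ^ d` periods, still tiles. From a
spectrum of it the pigeonhole principle selects, when `k` is large, as many frequencies as the
finite tile has elements, with differences so close to frequencies of the finite group that
rounding yields a spectrum of the finite tile. Finally, by Plancherel, a spectrum of a union of
`N` unit cubes has on average `N` points in a unit cube of `ℝ^d`, and at a difference of two of
these the transform can only vanish through its factor coming from the `N` integer points.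
-/

open scoped FourierTransform

section FourierChar

theorem exp_two_pi_I_mul (x : ℝ) : Complex.exp (2 * π * Complex.I * x) = 𝐞 x := by
  rw [Real.fourierChar_apply]
  push_cast
  ring_nf

theorem fourierChar_eq_one_iff {x : ℝ} : 𝐞 x = 1 ↔ ∃ n : ℤ, x = n := by
  rw [← Circle.coe_inj, ← exp_two_pi_I_mul, Circle.coe_one, Complex.exp_eq_one_iff]
  refine exists_congr fun n => ?_
  rw [mul_comm, mul_left_inj' Complex.two_pi_I_ne_zero]
  exact_mod_cast Iff.rfl

theorem coe_fourierChar_sum {ι : Type*} (s : Finset ι) (f : ι → ℝ) :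
    (𝐞 (∑ i ∈ s, f i) : ℂ) = ∏ i ∈ s, (𝐞 (f i) : ℂ) :=
  map_prod (Circle.coeHom.comp 𝐞.toMonoidHom) (Multiplicative.ofAdd ∘ f) s

/-- The geometric sum `∑_{q < k} e^{2πiqx}`. -/
noncomputable def dirichletSum (k : ℕ) (x : ℝ) : ℂ := ∑ q ∈ Finset.range k, (𝐞 (q * x) : ℂ)

theorem dirichletSum_zero_right (k : ℕ) : dirichletSum k 0 = k := by
  simp [dirichletSum]

theorem dirichletSum_intCast_add (k : ℕ) (n : ℤ) (x : ℝ) :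
    dirichletSum k (n + x) = dirichletSum k x := by
  refine Finset.sum_congr rfl fun q _ => ?_
  have hq : 𝐞 (q * (n : ℝ)) = 1 := fourierChar_eq_one_iff.2 ⟨q * n, by push_cast; rfl⟩
  rw [mul_add, AddChar.map_add_eq_mul, hq, one_mul]

theorem dirichletSum_ne_zero {k : ℕ} (hk : 0 < k) {x : ℝ} (hx : |x| * k < 1) :
    dirichletSum k x ≠ 0 := by
  obtain rfl | hx0 := eq_or_ne x 0
  · rw [dirichletSum_zero_right]
    exact_mod_cast hk.ne'
  have : (1 : ℝ) ≤ k := by exact_mod_cast hk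
  have hne : 𝐞 (k * x) ≠ 1 := by
    rw [Ne, fourierChar_eq_one_iff]
    rintro ⟨n, hn⟩
    have hn1 : |(n : ℝ)| < 1 := by rw [← hn, abs_mul, Nat.abs_cast, mul_comm]; exact hx
    have hn0 : n = 0 := Int.abs_lt_one_iff.1 (by exact_mod_cast hn1)
    rw [hn0, Int.cast_zero, mul_eq_zero] at hn
    exact hn.elim (by positivity) hx0
  intro h0
  refine hne (Circle.coe_inj.1 ?_)
  have hgeom := mul_neg_geom_sum (𝐞 x : ℂ) k
  have hpow (q : ℕ) : (𝐞 (q * x) : ℂ) = (𝐞 x : ℂ) ^ q := by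
    rw [← nsmul_eq_mul, AddChar.map_nsmul_eq_pow, Circle.coe_pow]
  simp only [dirichletSum, hpow] at h0
  rw [h0, mul_zero, ← hpow] at hgeom
  rw [Circle.coe_one, sub_eq_zero.1 hgeom.symm]

end FourierChar

section ExpSum

variable {d : ℕ}

/-- The Fourier transform `ξ ↦ ∑_{a ∈ A} e^{2πi⟨ξ, a⟩}` of a finite subset of `ℤ^d`. -/
noncomputable def expSum (A : Finset (Fin d → ℤ)) (ξ : Fin d → ℝ) : ℂ :=
  ∑ a ∈ A, (𝐞 (∑ j, ξ j * a j) : ℂ)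

theorem expSum_zero_right (A : Finset (Fin d → ℤ)) : expSum A 0 = A.card := by
  simp [expSum]

theorem spectralZd_iff_expSum {A : Finset (Fin d → ℤ)} :
    SpectralZd A ↔ ∃ S : Finset (Fin d → ℝ), S.card = A.card ∧
      ∀ s ∈ S, ∀ s' ∈ S, s ≠ s' → expSum A (s - s') = 0 := by
  simp only [SpectralZd, exp_two_pi_I_mul]
  rfl

end ExpSum

/-- `A` tiles `G` by translations. -/
def Tiles {G : Type*} [AddGroup G] (A : Finset G) : Prop :=
  ∃ T : Set G, ∀ x, ∃! t, t ∈ T ∧ x - t ∈ A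

/-- Some `#A` characters of `G` are pairwise orthogonal on `A`. For finite `G`, where all characters
are unitary, this says that `A` is a spectral set in `G`. -/
def SpectralFinite {G : Type*} [AddCommGroup G] (A : Finset G) : Prop :=
  ∃ S : Finset (AddChar G ℂ), S.card = A.card ∧
    ∀ χ ∈ S, ∀ ψ ∈ S, χ ≠ ψ → ∑ a ∈ A, (χ - ψ) a = 0

section FiniteGroups

open scoped Pointwise in
theorem card_le_mul_index_of_injOn_add {Γ : Type*} [AddCommGroup Γ] [Finite Γ]
    (H : AddSubgroup Γ) {S K : Finset Γ} (hK : K.Nonempty) (hKH : (K : Set Γ) ⊆ H)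
    (hinj : Set.InjOn (fun p : Γ × Γ => p.1 + p.2) ((S : Set Γ) ×ˢ (K : Set Γ))) :
    S.card ≤ Nat.card H / K.card * H.index := by
  classical
  have := Fintype.ofFinite Γ
  have hindex : (Finset.univ : Finset (Γ ⧸ H)).card = H.index := by
    rw [Finset.card_univ, H.index_eq_card, Nat.card_eq_fintype_card]
  rw [← hindex]
  refine Finset.card_le_mul_card_image_of_maps_to (f := ((↑) : Γ → Γ ⧸ H))
    (fun _ _ => Finset.mem_univ _) _ fun c _ => ?_
  obtain ⟨s₀, rfl⟩ := QuotientAddGroup.mk_surjective c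
  set F := S.filter fun s : Γ => (s : Γ ⧸ H) = s₀
  have hsub : ((F + K : Finset Γ) : Set Γ) ⊆ (s₀ + ·) '' (H : Set Γ) := by
    intro x hx
    obtain ⟨s, hs, k, hk, rfl⟩ := Finset.mem_add.1 (Finset.mem_coe.1 hx)
    have hs' : -s₀ + s ∈ H := QuotientAddGroup.eq.1 (Finset.mem_filter.1 hs).2.symm
    exact ⟨-s₀ + s + k, H.add_mem hs' (hKH hk), by simp [add_assoc]⟩
  have hcard : F.card * K.card = (F + K).card :=
    (Finset.card_add_iff.2 (hinj.mono
      (Set.prod_mono (Finset.coe_subset.2 (Finset.filter_subset _ _)) subset_rfl))).symm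
  rw [Nat.le_div_iff_mul_le hK.card_pos, hcard, ← Set.ncard_coe_finset]
  calc ((F + K : Finset Γ) : Set Γ).ncard
      ≤ ((s₀ + ·) '' (H : Set Γ)).ncard := Set.ncard_le_ncard hsub
    _ = Nat.card H := Set.ncard_image_of_injective _ (add_right_injective s₀)

variable {G : Type*} [AddCommGroup G] [Finite G] {A : Finset G}

theorem SpectralFinite.card_le (hA : SpectralFinite A) (H : AddSubgroup (AddChar G ℂ))
    {K : Finset (AddChar G ℂ)} (hK : K.Nonempty) (hKH : (K : Set (AddChar G ℂ)) ⊆ H)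
    (hsum : ∀ χ ∈ K, ∀ ψ ∈ K, ∑ a ∈ A, (χ - ψ) a ≠ 0) :
    A.card ≤ Nat.card H / K.card * H.index := by
  obtain ⟨S, hcard, horth⟩ := hA
  rw [← hcard]
  refine card_le_mul_index_of_injOn_add H hK hKH ?_
  rintro ⟨s, χ⟩ ⟨hs, hχ⟩ ⟨s', χ'⟩ ⟨hs', hχ'⟩ (heq : s + χ = s' + χ')
  have hdiff : s - s' = χ' - χ := sub_eq_sub_iff_add_eq_add.2 (by rw [heq, add_comm])
  obtain rfl : s = s' := by
    by_contra hne
    exact hsum _ hχ' _ hχ (hdiff ▸ horth s hs s' hs' hne)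
  rw [add_left_cancel heq]

end FiniteGroups

section LayeredKernel

variable {W L C : Type*} [AddCommGroup W] [AddCommGroup C]
  [Fintype W] [Fintype L] [DecidableEq C]

/-- The kernels of a family of homomorphisms `φ z : W →+ C`, each placed on its own layer
`W × {z}` of `W × L`. -/
def layeredKernel (φ : L → W →+ C) : Finset (W × L) := {p | φ p.2 p.1 = 0}

variable {φ : L → W →+ C}

theorem mem_layeredKernel {p : W × L} : p ∈ layeredKernel φ ↔ φ p.2 p.1 = 0 := by
  simp [layeredKernel]

theorem tiles_layeredKernel [AddCommGroup L] {ι : Type*} {τ : ι → W}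
    (hτ : ∀ z, Function.Bijective (φ z ∘ τ)) : Tiles (layeredKernel φ) := by
  refine ⟨Set.range τ ×ˢ {0}, fun ⟨w, z⟩ => ?_⟩
  obtain ⟨i, hi : φ z (τ i) = φ z w⟩ := (hτ z).surjective (φ z w)
  refine ⟨(τ i, 0), ⟨⟨⟨i, rfl⟩, rfl⟩, by simp [mem_layeredKernel, hi]⟩, ?_⟩
  rintro ⟨_, z'⟩ ⟨⟨⟨i', rfl⟩, rfl : z' = 0⟩, h⟩
  have hi' : φ z w = φ z (τ i') := by simpa [mem_layeredKernel, sub_eq_zero] using h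
  rw [(hτ z).injective (hi'.symm.trans hi.symm : φ z (τ i') = φ z (τ i))]

theorem sum_layeredKernel {M : Type*} [AddCommMonoid M] (f : W → M) :
    ∑ p ∈ layeredKernel φ, f p.1 = ∑ z, ∑ w : (φ z).ker, f w := by
  classical
  rw [layeredKernel, Finset.sum_filter, Fintype.sum_prod_type_right]
  refine Finset.sum_congr rfl fun z _ => ?_
  rw [← Finset.sum_filter, Finset.sum_subtype _ (p := (· ∈ (φ z).ker)) (by simp)]

theorem card_layeredKernel_mul [Fintype C] (hφ : ∀ z, Function.Surjective (φ z)) :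
    (layeredKernel φ).card * Fintype.card C = Fintype.card W * Fintype.card L := by
  classical
  have hker (z : L) : Fintype.card (φ z).ker * Fintype.card C = Fintype.card W := by
    rw [← Nat.card_eq_fintype_card, ← Nat.card_eq_fintype_card, ← Nat.card_eq_fintype_card,
      ← Nat.card_congr (QuotientAddGroup.quotientKerEquivOfSurjective (φ z) (hφ z)).toEquiv,
      mul_comm, ← AddSubgroup.card_eq_card_quotient_mul_card_addSubgroup]
  have h := sum_layeredKernel (φ := φ) (fun _ => 1)
  simp only [Finset.sum_const, smul_eq_mul, mul_one, Finset.card_univ] at h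
  rw [h, Finset.sum_mul, Finset.sum_congr rfl fun z _ => hker z, Finset.sum_const, smul_eq_mul,
    Finset.card_univ, mul_comm]

theorem sum_layeredKernel_ne_zero {χ : AddChar W ℂ} (h : ∃ z, ∀ w, φ z w = 0 → χ w = 1) :
    ∑ p ∈ layeredKernel φ, χ p.1 ≠ 0 := by
  classical
  have hlayer (z : L) : ∑ w : (φ z).ker, χ w =
      ((if χ.compAddMonoidHom (φ z).ker.subtype = 0
        then Fintype.card (φ z).ker else 0 : ℕ) : ℂ) :=
    (AddChar.sum_eq_ite (χ.compAddMonoidHom (φ z).ker.subtype)).trans (by push_cast; rfl)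
  obtain ⟨z, hz⟩ := h
  have htriv : χ.compAddMonoidHom (φ z).ker.subtype = 0 := by
    ext w
    exact hz w w.2
  rw [sum_layeredKernel, Finset.sum_congr rfl fun z _ => hlayer z, ← Nat.cast_sum,
    Nat.cast_ne_zero]
  exact fun h0 => absurd (Finset.sum_eq_zero_iff.1 h0 z (Finset.mem_univ z))
    ((if_pos htriv).trans_ne Fintype.card_ne_zero)

end LayeredKernel

section Example

/-- The homomorphism `w ↦ ∑ j, (σ j + 1) w j`, whose coefficients are the nonzero residues modulo
`n + 1` in the order prescribed by `σ`. -/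
def permForm {n : ℕ} (σ : Equiv.Perm (Fin n)) : (Fin n → ZMod (n + 1)) →+ ZMod (n + 1) :=
  AddMonoidHom.mk' (fun w => ∑ j, ((σ j : ℕ) + 1 : ZMod (n + 1)) * w j) fun w w' => by
    simp [mul_add, Finset.sum_add_distrib]

theorem permForm_apply {n : ℕ} (σ : Equiv.Perm (Fin n)) (w : Fin n → ZMod (n + 1)) :
    permForm σ w = ∑ j, ((σ j : ℕ) + 1 : ZMod (n + 1)) * w j := rfl

theorem permForm_comp_bijective {n : ℕ} (σ : Equiv.Perm (Fin n)) :
    Function.Bijective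
      (permForm σ ∘ fun i : Option (Fin n) => i.elim 0 fun j => Pi.single j 1) := by
  rw [Fintype.bijective_iff_surjective_and_card]
  refine ⟨fun c => ?_, by simp [ZMod.card]⟩
  obtain hc | ⟨i, hi⟩ : c.val = 0 ∨ ∃ i, c.val = i + 1 := by
    cases h : c.val <;> simp
  · exact ⟨none, by simp [(ZMod.val_eq_zero c).1 hc]⟩
  · have hin : i < n := by have := c.val_lt; omega
    refine ⟨some (σ.symm ⟨i, hin⟩), ?_⟩
    rw [← ZMod.natCast_zmod_val c, hi]
    simp [permForm_apply, Pi.single_apply]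

/-- The characters of `(ℤ/6)ⁿ` of order dividing three, parametrized by `(ℤ/3)ⁿ`. -/
noncomputable def cubicChar (n : ℕ) : (Fin n → ZMod 3) →+ AddChar (Fin n → ZMod 6) ℂ :=
  AddMonoidHom.mk'
    (fun v => ZMod.stdAddChar.compAddMonoidHom <| AddMonoidHom.mk'
      (fun w => ∑ j, v j * ZMod.castHom (by norm_num : 3 ∣ 6) (ZMod 3) (w j)) fun w w' => by
        simp [mul_add, Finset.sum_add_distrib])
    fun v v' => by
      ext w
      simp [add_mul, Finset.sum_add_distrib, AddChar.map_add_eq_mul]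

theorem cubicChar_apply {n : ℕ} (v : Fin n → ZMod 3) (w : Fin n → ZMod 6) :
    cubicChar n v w =
      ZMod.stdAddChar (∑ j, v j * ZMod.castHom (by norm_num : 3 ∣ 6) (ZMod 3) (w j)) := rfl

theorem cubicChar_injective (n : ℕ) : Function.Injective (cubicChar n) := by
  intro v v' h
  ext j
  have hj := DFunLike.congr_fun h (Pi.single j 1)
  simp only [cubicChar_apply] at hj
  simpa [Pi.single_apply] using ZMod.injective_stdAddChar hj

theorem cubicChar_eq_one_of_permForm_eq_zero {σ : Equiv.Perm (Fin 5)} {v : Fin 5 → ZMod 3}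
    (hv : ∀ j, v j = (σ j : ℕ) + 1) {w : Fin 5 → ZMod 6} (hw : permForm σ w = 0) :
    cubicChar 5 v w = 1 := by
  have hcast : ∑ j, v j * ZMod.castHom (by norm_num : 3 ∣ 6) (ZMod 3) (w j) =
      ZMod.castHom (by norm_num : 3 ∣ 6) (ZMod 3) (permForm σ w) := by
    simp only [hv, permForm_apply, map_sum, map_mul, map_add, map_natCast, map_one]
  rw [cubicChar_apply, hcast, hw, map_zero, AddChar.map_zero_eq_one]

/-- The exponents of a `6 × 6` complex Hadamard matrix whose entries are cube roots of unity, with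
its constant first column removed. -/
def hadamardExponent : Fin 6 → Fin 5 → ZMod 3 :=
  ![![0, 0, 0, 0, 0], ![0, 1, 1, 2, 2], ![1, 0, 2, 2, 1],
    ![1, 2, 0, 1, 2], ![2, 2, 1, 0, 1], ![2, 1, 2, 1, 0]]

theorem hadamardExponent_injective : Function.Injective hadamardExponent := by decide

set_option maxRecDepth 10000 in
-- Each difference takes every value of `ℤ/3` exactly twice once the removed entry `0` is restored.
theorem exists_perm_hadamardExponent_sub : ∀ i i', i ≠ i' → ∃ σ : Equiv.Perm (Fin 5),
    ∀ j, hadamardExponent i j - hadamardExponent i' j = (σ j : ℕ) + 1 := by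
  decide +kernel

variable (L : Type*) [AddCommGroup L]

/-- The characters `cubicChar` of `(ℤ/6)⁵`, extended to `(ℤ/6)⁵ × L` by ignoring `L`. -/
noncomputable def cubicCharFst : (Fin 5 → ZMod 3) →+ AddChar ((Fin 5 → ZMod 6) × L) ℂ :=
  AddMonoidHom.mk' (fun v => (cubicChar 5 v).compAddMonoidHom (AddMonoidHom.fst _ L))
    fun v v' => by rw [map_add]; rfl

theorem cubicCharFst_injective : Function.Injective (cubicCharFst L) := fun _ _ h =>
  cubicChar_injective 5 <| DFunLike.ext _ _ fun w => DFunLike.congr_fun h (w, (0 : L))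

variable {L} [Fintype L] {ℓ : L → Equiv.Perm (Fin 5)}

theorem sum_cubicCharFst_ne_zero (hℓ : Function.Surjective ℓ) (i i' : Fin 6) :
    ∑ p ∈ layeredKernel (fun z => permForm (ℓ z)),
      (cubicCharFst L (hadamardExponent i) - cubicCharFst L (hadamardExponent i')) p ≠ 0 := by
  rw [← map_sub]
  refine sum_layeredKernel_ne_zero
    (χ := cubicChar 5 (hadamardExponent i - hadamardExponent i')) ?_
  obtain rfl | hne := eq_or_ne i i'
  · exact ⟨0, fun w _ => by rw [sub_self, map_zero, AddChar.zero_apply]⟩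
  · obtain ⟨σ, hσ⟩ := exists_perm_hadamardExponent_sub i i' hne
    obtain ⟨z, rfl⟩ := hℓ σ
    exact ⟨z, fun w hw => cubicChar_eq_one_of_permForm_eq_zero hσ hw⟩

theorem not_spectralFinite_layeredKernel_permForm (hℓ : Function.Surjective ℓ) :
    ¬ SpectralFinite (layeredKernel fun z => permForm (ℓ z)) := by
  classical
  intro hA
  set H := (cubicCharFst L).range
  set K := Finset.univ.image (cubicCharFst L ∘ hadamardExponent)
  have hK : K.card = 6 := by
    rw [Finset.card_image_of_injective _
      ((cubicCharFst_injective L).comp hadamardExponent_injective), Finset.card_univ,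
      Fintype.card_fin]
  have hKH : (K : Set (AddChar ((Fin 5 → ZMod 6) × L) ℂ)) ⊆ H := by
    rw [Finset.coe_image, Finset.coe_univ, Set.image_univ]
    exact Set.range_comp_subset_range _ _
  have hle := hA.card_le H (Finset.card_pos.1 (by omega)) hKH
    (by simpa [K] using sum_cubicCharFst_ne_zero hℓ)
  have hH : Nat.card H = 243 := by
    rw [← Nat.card_congr (AddMonoidHom.ofInjective (cubicCharFst_injective L)).toEquiv]
    simp
  have hindex : Nat.card H * H.index = 6 ^ 5 * Fintype.card L := by
    rw [H.card_mul_index]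
    simp [AddChar.card_eq, ZMod.card]
  have hcard : (layeredKernel fun z => permForm (ℓ z)).card * 6 = 6 ^ 5 * Fintype.card L := by
    have h := card_layeredKernel_mul (φ := fun z => permForm (ℓ z))
      fun z => (permForm_comp_bijective (ℓ z)).surjective.of_comp
    simpa [ZMod.card] using h
  have hL : 0 < Fintype.card L := Fintype.card_pos_iff.2 ⟨0⟩
  rw [hK, hH] at hle
  rw [hH] at hindex
  omega

-- `121` is at least `5!`, the number of layers needed, and prime to `6`, which lets the group be a
-- quotient of `ℤ⁵`.
theorem exists_tiles_not_spectralFinite :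
    ∃ A : Finset ((Fin 5 → ZMod 6) × ZMod 121), Tiles A ∧ ¬ SpectralFinite A := by
  obtain ⟨e⟩ : Nonempty (Equiv.Perm (Fin 5) ↪ ZMod 121) :=
    Function.Embedding.nonempty_of_card_le <| by
      rw [Fintype.card_perm, Fintype.card_fin, ZMod.card]
      decide
  exact ⟨layeredKernel fun z => permForm (Function.invFun e z),
    tiles_layeredKernel fun z => permForm_comp_bijective _,
    not_spectralFinite_layeredKernel_permForm (Function.invFun_surjective e.injective)⟩

end Example

section Periodization

theorem exists_addChar_comp_eq {G Q : Type*} [AddCommGroup G] [AddCommGroup Q]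
    {ρ : G →+ Q} (hρ : Function.Surjective ρ) {ψ : AddChar G ℂ} (hψ : ∀ x, ρ x = 0 → ψ x = 1) :
    ∃ χ : AddChar Q ℂ, ∀ x, χ (ρ x) = ψ x := by
  have hcongr {x y : G} (h : ρ x = ρ y) : ψ x = ψ y := by
    rw [← sub_add_cancel x y, AddChar.map_add_eq_mul, hψ _ (by rw [map_sub, h, sub_self]), one_mul]
  have hlift (x : G) : ψ (Function.surjInv hρ (ρ x)) = ψ x := hcongr (Function.surjInv_eq hρ _)
  refine ⟨⟨fun g => ψ (Function.surjInv hρ g), ?_, fun g g' => ?_⟩, hlift⟩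
  · rw [← map_zero ρ, hlift, AddChar.map_zero_eq_one]
  · obtain ⟨x, rfl⟩ := hρ g
    obtain ⟨y, rfl⟩ := hρ g'
    rw [← map_add, hlift, hlift, hlift, AddChar.map_add_eq_mul]

variable {d : ℕ} {G : Type*} [AddCommGroup G] (ρ : (Fin d → ℤ) →+ G) (m : Fin d → ℕ)

open Classical in
/-- The set `A(k)`: the points of the preimage of `A` under `ρ` in the box `∏ j, [0, k m_j)`. It
consists of `k ^ d` copies of `A` when `ρ` has kernel `∏ j, m_j ℤ`. -/
noncomputable def periodization (k : ℕ) (A : Finset G) : Finset (Fin d → ℤ) :=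
  {x ∈ Fintype.piFinset fun j => Finset.Ico (0 : ℤ) (m j * k) | ρ x ∈ A}

variable {ρ m} {A : Finset G} {k : ℕ}

theorem mem_periodization {x : Fin d → ℤ} :
    x ∈ periodization ρ m k A ↔ (∀ j, 0 ≤ x j ∧ x j < m j * k) ∧ ρ x ∈ A := by
  simp [periodization]

theorem map_emod (hker : ∀ x, ρ x = 0 ↔ ∀ j, (m j : ℤ) ∣ x j) (x : Fin d → ℤ) :
    ρ (fun j => x j % m j) = ρ x := by
  rw [← sub_eq_zero, ← map_sub, hker]
  exact fun j => Int.modEq_iff_dvd.1 (Int.mod_modEq _ _).symm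

variable [∀ j, NeZero (m j)]

theorem sum_periodization_one (hρ : Function.Surjective ρ)
    (hker : ∀ x, ρ x = 0 ↔ ∀ j, (m j : ℤ) ∣ x j) {M : Type*} [AddCommMonoid M] (f : G → M) :
    ∑ x ∈ periodization ρ m 1 A, f (ρ x) = ∑ a ∈ A, f a := by
  refine Finset.sum_nbij ρ (fun x hx => (mem_periodization.1 hx).2) ?_ ?_ fun _ _ => rfl
  · intro x hx y hy hxy
    funext j
    have hx := (mem_periodization.1 hx).1 j
    have hy := (mem_periodization.1 hy).1 j
    simp only [Nat.cast_one, mul_one] at hx hy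
    have hdvd : (m j : ℤ) ∣ y j - x j := (hker (y - x)).1 (by rw [map_sub, hxy, sub_self]) j
    rw [← Int.emod_eq_of_lt hx.1 hx.2, ← Int.emod_eq_of_lt hy.1 hy.2]
    exact Int.modEq_iff_dvd.2 hdvd
  · intro a ha
    obtain ⟨x, rfl⟩ := hρ a
    have hpos (j) : (0 : ℤ) < m j := by exact_mod_cast Nat.pos_of_neZero (m j)
    refine ⟨fun j => x j % m j, mem_periodization.2 ⟨fun j => ?_, ?_⟩, map_emod hker x⟩
    · simpa using ⟨Int.emod_nonneg _ (hpos j).ne', Int.emod_lt_of_pos _ (hpos j)⟩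
    · rwa [map_emod hker]

theorem tiles_periodization (hA : Tiles A) (hρ : Function.Surjective ρ)
    (hker : ∀ x, ρ x = 0 ↔ ∀ j, (m j : ℤ) ∣ x j) (hk : 0 < k) :
    Tiles (periodization ρ m k A) := by
  obtain ⟨T, hT⟩ := hA
  have hpos (j) : (0 : ℤ) < m j * k := by
    exact_mod_cast Nat.mul_pos (Nat.pos_of_neZero (m j)) hk
  have hper (q : Fin d → ℤ) : ρ (fun j => m j * k * q j) = 0 :=
    (hker _).2 fun j => ⟨k * q j, mul_assoc _ _ _⟩
  let r : G → Fin d → ℤ := Function.surjInv hρ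
  have hr (g : G) : ρ (r g) = g := Function.surjInv_eq hρ g
  refine ⟨{t | ∃ g ∈ T, ∃ q : Fin d → ℤ, t = r g + fun j => m j * k * q j}, fun x => ?_⟩
  obtain ⟨g, ⟨hgT, hg⟩, huniq⟩ := hT (ρ x)
  refine ⟨r g + fun j => m j * k * ((x j - r g j) / (m j * k)), ⟨⟨g, hgT, _, rfl⟩, ?_⟩, ?_⟩
  · refine mem_periodization.2 ⟨fun j => ?_, by rwa [map_sub, map_add, hper, add_zero, hr]⟩
    have hmod : (x - (r g + fun j => m j * k * ((x j - r g j) / (m j * k)))) j =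
        (x j - r g j) % (m j * k) := by
      rw [Int.emod_def, Pi.sub_apply, Pi.add_apply, sub_sub]
    rw [hmod]
    exact ⟨Int.emod_nonneg _ (hpos j).ne', Int.emod_lt_of_pos _ (hpos j)⟩
  · rintro _ ⟨⟨g', hg'T, q, rfl⟩, hmem⟩
    obtain ⟨hbox, hρmem⟩ := mem_periodization.1 hmem
    rw [map_sub, map_add, hper, add_zero, hr] at hρmem
    obtain rfl := huniq g' ⟨hg'T, hρmem⟩
    congr 1
    funext j
    have hj : 0 ≤ x j - r g' j - m j * k * q j ∧ x j - r g' j - m j * k * q j < m j * k := by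
      simpa only [Pi.sub_apply, Pi.add_apply, sub_sub] using hbox j
    have hq : (x j - r g' j) / (m j * k) = q j :=
      ((Int.ediv_emod_unique (hpos j)).2 ⟨sub_add_cancel _ _, hj⟩).1
    rw [hq]

theorem mem_periodization_iff_emod (hker : ∀ x, ρ x = 0 ↔ ∀ j, (m j : ℤ) ∣ x j)
    {x : Fin d → ℤ} : x ∈ periodization ρ m k A ↔
      (fun j => x j % m j) ∈ periodization ρ m 1 A ∧ ∀ j, 0 ≤ x j / m j ∧ x j / m j < k := by
  have hpos (j) : (0 : ℤ) < m j := by exact_mod_cast Nat.pos_of_neZero (m j)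
  have hbox (j) : 0 ≤ x j / m j ∧ x j / m j < k ↔ 0 ≤ x j ∧ x j < m j * k := by
    rw [Int.ediv_nonneg_iff_of_pos (hpos j), Int.ediv_lt_iff_lt_mul (hpos j), mul_comm]
  have hmod (j) : 0 ≤ x j % m j ∧ x j % m j < m j * (1 : ℕ) := by
    simpa using ⟨Int.emod_nonneg _ (hpos j).ne', Int.emod_lt_of_pos _ (hpos j)⟩
  simp only [mem_periodization, map_emod hker, hbox]
  exact ⟨fun h => ⟨⟨hmod, h.2⟩, h.1⟩, fun h => ⟨h.2, h.1.2⟩⟩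

theorem sum_periodization_eq_sum_product (hker : ∀ x, ρ x = 0 ↔ ∀ j, (m j : ℤ) ∣ x j)
    {M : Type*} [AddCommMonoid M] (f : (Fin d → ℤ) → M) :
    ∑ x ∈ periodization ρ m k A, f x =
      ∑ p ∈ periodization ρ m 1 A ×ˢ Fintype.piFinset fun _ => Finset.range k,
        f fun j => p.1 j + m j * p.2 j := by
  have hdivmod {p : (Fin d → ℤ) × (Fin d → ℕ)}
      (hp : p ∈ periodization ρ m 1 A ×ˢ Fintype.piFinset fun _ => Finset.range k) (j) :
      (p.1 j + m j * p.2 j) / m j = p.2 j ∧ (p.1 j + m j * p.2 j) % m j = p.1 j := by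
    refine (Int.ediv_emod_unique (by exact_mod_cast Nat.pos_of_neZero (m j))).2 ⟨rfl, ?_⟩
    simpa using (mem_periodization.1 (Finset.mem_product.1 hp).1).1 j
  have hcast {x} (hx : x ∈ periodization ρ m k A) (j) : ((x j / m j).toNat : ℤ) = x j / m j :=
    Int.toNat_of_nonneg (((mem_periodization_iff_emod hker).1 hx).2 j).1
  symm
  refine Finset.sum_nbij' (fun p j => p.1 j + m j * p.2 j)
    (fun x => (fun j => x j % m j, fun j => (x j / m j).toNat)) ?_ ?_ ?_ ?_ fun _ _ => rfl
  · intro p hp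
    obtain ⟨hp₁, hp₂⟩ := Finset.mem_product.1 hp
    simp only [mem_periodization_iff_emod hker (k := k), hdivmod hp]
    exact ⟨hp₁, fun j => ⟨Int.natCast_nonneg _,
      by exact_mod_cast Finset.mem_range.1 (Fintype.mem_piFinset.1 hp₂ j)⟩⟩
  · intro x hx
    obtain ⟨hmod, hdiv⟩ := (mem_periodization_iff_emod hker).1 hx
    refine Finset.mem_product.2 ⟨hmod, Fintype.mem_piFinset.2 fun j => ?_⟩
    rw [Finset.mem_range, ← Nat.cast_lt (α := ℤ), hcast hx]
    exact (hdiv j).2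
  · intro p hp
    simp only [hdivmod hp, Int.toNat_natCast]
  · intro x hx
    simp only [hcast hx, Int.emod_add_mul_ediv]

theorem expSum_periodization (hker : ∀ x, ρ x = 0 ↔ ∀ j, (m j : ℤ) ∣ x j) (ξ : Fin d → ℝ) :
    expSum (periodization ρ m k A) ξ =
      expSum (periodization ρ m 1 A) ξ * ∏ j, dirichletSum k (m j * ξ j) := by
  have hsplit (x : Fin d → ℤ) (q : Fin d → ℕ) :
      (𝐞 (∑ j, ξ j * ((x j + m j * q j : ℤ) : ℝ)) : ℂ) =
        𝐞 (∑ j, ξ j * x j) * ∏ j, (𝐞 (q j * (m j * ξ j)) : ℂ) := by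
    have harg : ∑ j, ξ j * ((x j + m j * q j : ℤ) : ℝ) =
        ∑ j, ξ j * x j + ∑ j, q j * (m j * ξ j) := by
      rw [← Finset.sum_add_distrib]
      exact Finset.sum_congr rfl fun j _ => by push_cast; ring
    rw [harg, AddChar.map_add_eq_mul, Circle.coe_mul,
      coe_fourierChar_sum _ fun j => q j * (m j * ξ j)]
  simp only [expSum, dirichletSum]
  rw [sum_periodization_eq_sum_product hker, Finset.prod_univ_sum, Finset.sum_mul_sum,
    Finset.sum_product]
  exact Finset.sum_congr rfl fun x _ => Finset.sum_congr rfl fun q _ => hsplit x q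

theorem card_periodization (hρ : Function.Surjective ρ)
    (hker : ∀ x, ρ x = 0 ↔ ∀ j, (m j : ℤ) ∣ x j) :
    (periodization ρ m k A).card = A.card * k ^ d := by
  have hone : (periodization ρ m 1 A).card = A.card := by
    rw [Finset.card_eq_sum_ones, Finset.card_eq_sum_ones]
    exact sum_periodization_one hρ hker fun _ => 1
  have h := expSum_periodization (A := A) (k := k) hker 0
  simp only [expSum_zero_right, Pi.zero_apply, mul_zero, dirichletSum_zero_right,
    Finset.prod_const, Finset.card_univ, Fintype.card_fin, hone] at h
  exact_mod_cast h

theorem exists_addChar_eq_fourierChar (hρ : Function.Surjective ρ)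
    (hker : ∀ x, ρ x = 0 ↔ ∀ j, (m j : ℤ) ∣ x j) (h : Fin d → ℤ) :
    ∃ χ : AddChar G ℂ, ∀ x, χ (ρ x) = 𝐞 (∑ j, (h j / m j : ℝ) * x j) := by
  let ψ : AddChar (Fin d → ℤ) ℂ :=
    (Circle.coeHom.compAddChar 𝐞).compAddMonoidHom <|
      AddMonoidHom.mk' (fun x => ∑ j, (h j / m j : ℝ) * x j) fun x y => by
        simp [mul_add, Finset.sum_add_distrib]
  refine exists_addChar_comp_eq hρ (ψ := ψ) fun x hx => ?_
  choose q hq using (hker x).1 hx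
  have hint : ∑ j, (h j / m j : ℝ) * x j = (∑ j, h j * q j : ℤ) := by
    push_cast
    refine Finset.sum_congr rfl fun j _ => ?_
    have hm : (m j : ℝ) ≠ 0 := Nat.cast_ne_zero.2 (NeZero.ne (m j))
    rw [hq j]
    push_cast
    field_simp
  exact congrArg Circle.coeHom (fourierChar_eq_one_iff.2 ⟨_, hint⟩)

theorem exists_addMonoidHom_addChar (hρ : Function.Surjective ρ)
    (hker : ∀ x, ρ x = 0 ↔ ∀ j, (m j : ℤ) ∣ x j) :
    ∃ X : (Fin d → ℤ) →+ AddChar G ℂ, ∀ h x, X h (ρ x) = 𝐞 (∑ j, (h j / m j : ℝ) * x j) := by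
  choose X hX using exists_addChar_eq_fourierChar (m := m) hρ hker
  refine ⟨AddMonoidHom.mk' X fun h h' => DFunLike.ext _ _ (hρ.forall.2 fun x => ?_), hX⟩
  have hadd : ∑ j, ((h + h') j / m j : ℝ) * x j =
      ∑ j, (h j / m j : ℝ) * x j + ∑ j, (h' j / m j : ℝ) * x j := by
    rw [← Finset.sum_add_distrib]
    exact Finset.sum_congr rfl fun j _ => by rw [Pi.add_apply]; push_cast; ring
  rw [AddChar.add_apply, hX, hX, hX, hadd, AddChar.map_add_eq_mul, Circle.coe_mul]

theorem eventually_sum_mul_fourierChar_ne_zero [Finite G] (hρ : Function.Surjective ρ)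
    (hker : ∀ x, ρ x = 0 ↔ ∀ j, (m j : ℤ) ∣ x j) (A : Finset G) :
    ∀ᶠ u : Fin d → ℝ in nhds 0, ∀ χ : AddChar G ℂ, ∑ a ∈ A, χ a ≠ 0 →
      ∑ x ∈ periodization ρ m 1 A, χ (ρ x) * 𝐞 (∑ j, u j * x j) ≠ 0 := by
  refine Filter.eventually_all.2 fun χ => ?_
  by_cases hχ : ∑ a ∈ A, χ a = 0
  · simp [hχ]
  have hcont : Continuous fun u : Fin d → ℝ =>
      ∑ x ∈ periodization ρ m 1 A, χ (ρ x) * (𝐞 (∑ j, u j * x j) : ℂ) := by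
    fun_prop
  have hzero : ∑ x ∈ periodization ρ m 1 A,
      χ (ρ x) * (𝐞 (∑ j, (0 : Fin d → ℝ) j * x j) : ℂ) ≠ 0 := by
    simpa using (sum_periodization_one hρ hker χ).trans_ne hχ
  filter_upwards [hcont.continuousAt.eventually_ne hzero] with u hu _ using hu

theorem eventually_expSum_periodization_ne_zero [Finite G] (hρ : Function.Surjective ρ)
    (hker : ∀ x, ρ x = 0 ↔ ∀ j, (m j : ℤ) ∣ x j) (A : Finset G) :
    ∀ᶠ k : ℕ in Filter.atTop, ∀ (h : Fin d → ℤ) (χ : AddChar G ℂ) (u : Fin d → ℝ),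
      (∀ x, χ (ρ x) = 𝐞 (∑ j, (h j / m j : ℝ) * x j)) → ∑ a ∈ A, χ a ≠ 0 →
      (∀ j, |m j * u j| * k < 1) →
      expSum (periodization ρ m k A) (fun j => h j / m j + u j) ≠ 0 := by
  obtain ⟨ε, hε, hball⟩ := Metric.eventually_nhds_iff.1
    (eventually_sum_mul_fourierChar_ne_zero hρ hker A)
  obtain ⟨N, hN⟩ := exists_nat_gt (1 / ε)
  filter_upwards [Filter.eventually_ge_atTop N, Filter.eventually_gt_atTop 0] with k hNk hk
    h χ u hχ hsum hu
  have : (0 : ℝ) < k := by exact_mod_cast hk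
  have hm (j) : (1 : ℝ) ≤ m j := by exact_mod_cast Nat.one_le_iff_ne_zero.2 (NeZero.ne (m j))
  have hdist : dist u 0 < ε := by
    refine (dist_pi_lt_iff hε).2 fun j => ?_
    have hkε : 1 < k * ε := by
      rw [← div_lt_iff₀ hε]; exact hN.trans_le (by exact_mod_cast hNk)
    have huj : |u j| * k < 1 := (hu j).trans_le' <| by
      rw [abs_mul, Nat.abs_cast]
      gcongr
      exact le_mul_of_one_le_left (abs_nonneg _) (hm j)
    rw [Pi.zero_apply, Real.dist_0_eq_abs]
    nlinarith
  have hsplit : expSum (periodization ρ m 1 A) (fun j => h j / m j + u j) =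
      ∑ x ∈ periodization ρ m 1 A, χ (ρ x) * 𝐞 (∑ j, u j * x j) := by
    simp only [expSum, hχ, add_mul, Finset.sum_add_distrib, AddChar.map_add_eq_mul, Circle.coe_mul]
  rw [expSum_periodization hker, hsplit]
  refine mul_ne_zero (hball hdist χ hsum) (Finset.prod_ne_zero_iff.2 fun j _ => ?_)
  have hj : (m j : ℝ) * (h j / m j + u j) = h j + m j * u j := by
    have := hm j; field_simp
  rw [hj, dirichletSum_intCast_add]
  exact dirichletSum_ne_zero hk (hu j)

theorem exists_subset_approx_int {S : Finset (Fin d → ℝ)} {n k : ℕ} (hk : 0 < k)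
    (hS : n * k ^ d ≤ S.card) (c : Fin d → ℝ) :
    ∃ S' ⊆ S, S'.card = n ∧ ∃ h : (Fin d → ℝ) → Fin d → ℤ, ∀ s ∈ S', ∀ s' ∈ S', ∀ j,
      |c j * (s j - s' j) - (h s j - h s' j : ℤ)| * k < 1 := by
  let N (s : Fin d → ℝ) (j : Fin d) : ℤ := ⌊c j * s j * k⌋
  let residues := Fintype.piFinset fun _ : Fin d => Finset.Ico (0 : ℤ) k
  have hcard : residues.card = k ^ d := by simp [residues]
  have hmaps : ∀ s ∈ S, (fun j => N s j % k) ∈ residues := fun s _ =>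
    Fintype.mem_piFinset.2 fun j => Finset.mem_Ico.2
      ⟨Int.emod_nonneg _ (by omega), Int.emod_lt_of_pos _ (by omega)⟩
  obtain ⟨r, -, hr⟩ := Finset.exists_le_card_fiber_of_mul_le_card_of_maps_to hmaps
    ⟨0, by simp [residues, hk]⟩ (n := n) (by rwa [hcard, mul_comm])
  obtain ⟨S', hS'r, hS'n⟩ := Finset.exists_subset_card_eq hr
  refine ⟨S', hS'r.trans (Finset.filter_subset _ _), hS'n, fun s j => N s j / k,
    fun s hs s' hs' j => ?_⟩
  have hfract {t} (ht : t ∈ S') :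
      (c j * t j - (N t j / k : ℤ)) * k = r j + Int.fract (c j * t j * k) := by
    have hmod : N t j % k = r j := congrFun (Finset.mem_filter.1 (hS'r ht)).2 j
    have hdivmod : (r j : ℝ) + k * (N t j / k : ℤ) = N t j := by
      exact_mod_cast hmod ▸ Int.emod_add_mul_ediv (N t j) k
    rw [Int.fract]
    linear_combination -hdivmod
  have hdiff : (c j * (s j - s' j) - (N s j / k - N s' j / k : ℤ)) * k =
      Int.fract (c j * s j * k) - Int.fract (c j * s' j * k) := by
    push_cast
    linear_combination hfract hs - hfract hs'
  calc |c j * (s j - s' j) - (N s j / k - N s' j / k : ℤ)| * k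
      = |Int.fract (c j * s j * k) - Int.fract (c j * s' j * k)| := by
        rw [← hdiff, abs_mul, Nat.abs_cast]
    _ < 1 := abs_sub_lt_of_nonneg_of_lt (Int.fract_nonneg _) (Int.fract_lt_one _)
        (Int.fract_nonneg _) (Int.fract_lt_one _)

theorem eventually_not_spectralZd_periodization [Finite G] (hρ : Function.Surjective ρ)
    (hker : ∀ x, ρ x = 0 ↔ ∀ j, (m j : ℤ) ∣ x j) (hA : ¬ SpectralFinite A) :
    ∀ᶠ k : ℕ in Filter.atTop, ¬ SpectralZd (periodization ρ m k A) := by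
  classical
  filter_upwards [eventually_expSum_periodization_ne_zero hρ hker A,
    Filter.eventually_gt_atTop 0] with k hne hk hspec
  refine hA ?_
  obtain ⟨S, hcard, horth⟩ := spectralZd_iff_expSum.1 hspec
  rw [card_periodization hρ hker] at hcard
  obtain ⟨S', hS', hn, h, happrox⟩ := exists_subset_approx_int hk hcard.ge fun j => (m j : ℝ)
  obtain ⟨X, hX⟩ := exists_addMonoidHom_addChar hρ hker
  have hzero {s s'} (hs : s ∈ S') (hs' : s' ∈ S') (hss' : s ≠ s') :
      ∑ a ∈ A, (X (h s) - X (h s')) a = 0 := by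
    rw [← map_sub]
    by_contra hsum
    refine hne (h s - h s') _ (fun j => s j - s' j - ((h s - h s') j : ℤ) / m j) (hX _) hsum
      (fun j => ?_) ?_
    · have hm : (m j : ℝ) ≠ 0 := Nat.cast_ne_zero.2 (NeZero.ne (m j))
      rw [mul_sub, mul_div_cancel₀ _ hm]
      exact happrox s hs s' hs' j
    · convert horth s (hS' hs) s' (hS' hs') hss' using 2
      funext j
      rw [add_sub_cancel, Pi.sub_apply]
  have hinj : Set.InjOn (X ∘ h) S' := by
    intro s hs s' hs' heq
    by_contra hss'
    have hA0 : A.card = 0 := by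
      simpa [show X (h s) = X (h s') from heq] using hzero hs hs' hss'
    exact Finset.notMem_empty s (Finset.card_eq_zero.1 (hn.trans hA0) ▸ hs)
  refine ⟨S'.image (X ∘ h), by rw [Finset.card_image_of_injOn hinj, hn], ?_⟩
  simp only [Finset.mem_image, forall_exists_index, and_imp]
  rintro _ s hs rfl _ s' hs' rfl hXne
  exact hzero hs hs' fun hss' => hXne (congrArg _ hss')

end Periodization

section Lattice

variable {d : ℕ}

/-- Reduction of the first five coordinates modulo `6` and of the first also modulo `121`; it
identifies `(ℤ/6)⁵ × ℤ/121` with a quotient of `ℤ^d`. -/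
def reduction (hd : 5 ≤ d) : (Fin d → ℤ) →+ (Fin 5 → ZMod 6) × ZMod 121 :=
  AddMonoidHom.mk'
    (fun x => (fun i => (x (Fin.castLE hd i) : ZMod 6), (x (Fin.castLE hd 0) : ZMod 121)))
    fun x y => by ext <;> simp

/-- The period of `reduction` in the direction of coordinate `j`. -/
def reductionPeriod (j : Fin d) : ℕ :=
  if (j : ℕ) = 0 then 6 * 121 else if (j : ℕ) < 5 then 6 else 1

instance (j : Fin d) : NeZero (reductionPeriod j) :=
  ⟨by unfold reductionPeriod; split_ifs <;> norm_num⟩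

theorem reduction_surjective (hd : 5 ≤ d) : Function.Surjective (reduction hd) := by
  rintro ⟨w, z⟩
  -- `121 a - 120 b` is `a` modulo `6` and `b` modulo `121`.
  refine ⟨fun j => if hj : (j : ℕ) < 5 then 121 * (w ⟨j, hj⟩).val - 120 * z.val else 0,
    Prod.ext (funext fun i => ?_) ?_⟩
  · have h₁ : (121 : ZMod 6) = 1 := by decide
    have h₂ : (120 : ZMod 6) = 0 := by decide
    simp [reduction, h₁, h₂]
  · have h₁ : (121 : ZMod 121) = 0 := by decide
    have h₂ : (120 : ZMod 121) = -1 := by decide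
    simp [reduction, h₁, h₂]

theorem reduction_eq_zero_iff (hd : 5 ≤ d) (x : Fin d → ℤ) :
    reduction hd x = 0 ↔ ∀ j, (reductionPeriod j : ℤ) ∣ x j := by
  have h0 : reduction hd x = 0 ↔
      (∀ i, (6 : ℤ) ∣ x (Fin.castLE hd i)) ∧ (121 : ℤ) ∣ x (Fin.castLE hd 0) := by
    simp only [Prod.ext_iff, funext_iff]
    exact and_congr (forall_congr' fun i => ZMod.intCast_zmod_eq_zero_iff_dvd _ 6)
      (ZMod.intCast_zmod_eq_zero_iff_dvd _ 121)
  have hcop (n : ℤ) : 6 * 121 ∣ n ↔ 6 ∣ n ∧ 121 ∣ n := by omega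
  rw [h0]
  constructor
  · rintro ⟨h6, h121⟩ j
    unfold reductionPeriod
    split_ifs with hj hj
    · obtain rfl : j = Fin.castLE hd 0 := Fin.ext hj
      exact (hcop _).2 ⟨h6 0, h121⟩
    · exact h6 ⟨j, hj⟩
    · exact one_dvd _
  · intro h
    have h0 : 6 * 121 ∣ x (Fin.castLE hd 0) := by
      simpa [reductionPeriod] using h (Fin.castLE hd 0)
    refine ⟨fun i => ?_, ((hcop _).1 h0).2⟩
    have h6 : 6 ∣ reductionPeriod (Fin.castLE hd i) := by
      unfold reductionPeriod
      split_ifs with _ hi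
      exacts [⟨121, rfl⟩, dvd_rfl, (hi i.isLt).elim]
    exact (Int.natCast_dvd_natCast.2 h6).trans (h _)

theorem exists_tiles_not_spectralZd (hd : 5 ≤ d) :
    ∃ A : Finset (Fin d → ℤ), Tiles A ∧ ¬ SpectralZd A := by
  obtain ⟨A, htile, hspec⟩ := exists_tiles_not_spectralFinite
  have hρ := reduction_surjective hd
  have hker := reduction_eq_zero_iff hd
  obtain ⟨k, hk, hk0⟩ := ((eventually_not_spectralZd_periodization hρ hker hspec).and
    (Filter.eventually_gt_atTop 0)).exists
  exact ⟨_, tiles_periodization htile hρ hker hk0, hk⟩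

end Lattice

section Plancherel

variable {V F : Type*} [NormedAddCommGroup V] [InnerProductSpace ℝ V] [FiniteDimensional ℝ V]
  [MeasurableSpace V] [BorelSpace V] [NormedAddCommGroup F] [InnerProductSpace ℂ F]
  [CompleteSpace F]

theorem coeFn_fourier_toLp_ae_eq {f : V → F} (hf : Integrable f) (hf2 : MemLp f 2) :
    ⇑(𝓕 (hf2.toLp f) : Lp F 2 (volume : Measure V)) =ᵐ[volume] 𝓕 f := by
  have hcont : Continuous (𝓕 f) :=
    VectorFourier.fourierIntegral_continuous Real.continuous_fourierChar continuous_inner hf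
  refine ae_eq_of_integral_contDiff_smul_eq
    ((Lp.memLp _).locallyIntegrable one_le_two) hcont.locallyIntegrable fun g hg hgc => ?_
  have hgc' : HasCompactSupport (Complex.ofRealCLM ∘ g) := hgc.comp_left rfl
  set φ := hgc'.toSchwartzMap (by fun_prop)
  calc
    ∫ ξ, g ξ • (𝓕 (hf2.toLp f) : Lp F 2 (volume : Measure V)) ξ
      = Lp.toTemperedDistribution (𝓕 (hf2.toLp f)) φ := by
        simp [φ]
    _ = ∫ x, 𝓕 φ x • hf2.toLp f x := by
        rw [← Lp.fourier_toTemperedDistribution_eq, TemperedDistribution.fourier_apply,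
          Lp.toTemperedDistribution_apply]
    _ = ∫ x, 𝓕 (φ : V → ℂ) x • f x := by
        refine integral_congr_ae ?_
        filter_upwards [hf2.coeFn_toLp] with x hx
        rw [hx, SchwartzMap.fourier_coe]
    _ = ∫ ξ, φ ξ • 𝓕 f ξ := by
        simpa using! VectorFourier.integral_fourierIntegral_smul_eq_flip (L := innerₗ V)
          Real.continuous_fourierChar continuous_inner φ.integrable hf
    _ = ∫ ξ, g ξ • 𝓕 f ξ := by
        simp [φ]

theorem eLpNorm_fourier_two {f : V → F} (hf : Integrable f) (hf2 : MemLp f 2) :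
    eLpNorm (𝓕 f) 2 volume = eLpNorm f 2 volume := by
  rw [← eLpNorm_congr_ae (coeFn_fourier_toLp_ae_eq hf hf2), ← Lp.enorm_def, ← ofReal_norm,
    Lp.norm_fourier_eq, ofReal_norm, Lp.enorm_def, eLpNorm_congr_ae hf2.coeFn_toLp]

theorem lintegral_enorm_fourier_sq {f : V → F} (hf : Integrable f) (hf2 : MemLp f 2) :
    ∫⁻ ξ, ‖𝓕 f ξ‖ₑ ^ 2 = ∫⁻ x, ‖f x‖ₑ ^ 2 := by
  have hsq (g : V → F) : ∫⁻ x, ‖g x‖ₑ ^ 2 = eLpNorm g 2 volume ^ 2 := by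
    simpa using (eLpNorm_nnreal_pow_eq_lintegral (p := 2) two_ne_zero).symm
  rw [hsq, hsq, eLpNorm_fourier_two hf hf2]

end Plancherel

section TsumTranslates

variable {G : Type*} [AddCommGroup G]

theorem eq_zero_of_ae_tsum_sub_le [TopologicalSpace G] [ContinuousSub G] [MeasurableSpace G]
    {μ : Measure G} [μ.IsOpenPosMeasure] {g : G → ENNReal} (hg : Continuous g)
    (hg0 : g 0 ≠ ⊤) {S : Set G} (hS : ∀ᵐ x ∂μ, ∑' s : S, g (x - s) ≤ g 0) {s s' : G}
    (hs : s ∈ S) (hs' : s' ∈ S) (hne : s ≠ s') : g (s - s') = 0 := by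
  classical
  have hpair : ∀ᵐ x ∂μ, g (x - s) + g (x - s') ≤ g 0 := by
    filter_upwards [hS] with x hx
    have hsum := ENNReal.sum_le_tsum (f := fun t : S => g (x - t)) {⟨s, hs⟩, ⟨s', hs'⟩}
    rw [Finset.sum_pair (by simpa using hne)] at hsum
    exact hsum.trans hx
  have hclosed : IsClosed {x | g (x - s) + g (x - s') ≤ g 0} :=
    isClosed_le (by fun_prop) continuous_const
  have hall : s ∈ {x | g (x - s) + g (x - s') ≤ g 0} :=
    hclosed.closure_eq ▸ Measure.dense_of_ae hpair s
  rw [Set.mem_ofPred_eq, sub_self] at hall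
  exact nonpos_iff_eq_zero.1 (ENNReal.le_of_add_le_add_left hg0 (by simpa using hall))

theorem tsum_indicator_add_eq_encard (S Q : Set G) (u : G) :
    ∑' s : S, Q.indicator (1 : G → ENNReal) (u + s) = {s ∈ S | u + s ∈ Q}.encard := by
  rw [← ENNReal.tsum_set_one, tsum_subtype S fun s => Q.indicator 1 (u + s),
    tsum_subtype _ fun _ => 1]
  refine tsum_congr fun s => ?_
  by_cases hs : s ∈ S <;> by_cases hQ : u + s ∈ Q <;> simp [hs, hQ]

variable [MeasurableSpace G] [MeasurableAdd G] {μ : Measure G} [μ.IsAddRightInvariant]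

theorem lintegral_tsum_mul_sub {S : Set G} (hS : S.Countable) {f g : G → ENNReal}
    (hf : Measurable f) (hg : Measurable g) :
    ∫⁻ x, f x * ∑' s : S, g (x - s) ∂μ = ∫⁻ x, (∑' s : S, f (x + s)) * g x ∂μ := by
  have : Countable S := hS
  have hsub (s : G) : Measurable fun x => g (x - s) := by
    simpa only [sub_eq_add_neg, Function.comp_def] using hg.comp (measurable_add_const (-s))
  have hleft (s : S) : AEMeasurable (fun x => f x * g (x - s)) μ := (hf.mul (hsub s)).aemeasurable
  have hright (s : S) : AEMeasurable (fun x => f (x + s) * g x) μ :=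
    ((hf.comp (measurable_add_const _)).mul hg).aemeasurable
  simp_rw [← ENNReal.tsum_mul_left, ← ENNReal.tsum_mul_right]
  rw [lintegral_tsum hleft, lintegral_tsum hright]
  refine tsum_congr fun s => ?_
  rw [← lintegral_add_right_eq_self (fun x => f x * g (x - s)) (s : G)]
  simp only [add_sub_cancel_right]

theorem exists_lt_encard_of_ae_tsum_sub_eq {S : Set G} (hS : S.Countable) {g : G → ENNReal}
    (hg : Measurable g) {c : ENNReal} (hc : ∀ᵐ x ∂μ, ∑' s : S, g (x - s) = c) {Q : Set G}
    (hQ : MeasurableSet Q) {n : ℕ} (hn : n * ∫⁻ x, g x ∂μ < μ Q * c) :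
    ∃ u : G, n < {s ∈ S | u + s ∈ Q}.encard := by
  contrapose! hn
  calc
    μ Q * c = ∫⁻ x, Q.indicator 1 x * ∑' s : S, g (x - s) ∂μ := by
      rw [lintegral_congr_ae (g := fun x => Q.indicator 1 x * c) (hc.mono fun x hx => by rw [hx]),
        lintegral_mul_const _ (measurable_one.indicator hQ), lintegral_indicator_one hQ]
    _ = ∫⁻ x, {s ∈ S | x + s ∈ Q}.encard * g x ∂μ := by
      simp_rw [lintegral_tsum_mul_sub hS (measurable_one.indicator hQ) hg,
        tsum_indicator_add_eq_encard]
    _ ≤ ∫⁻ x, n * g x ∂μ := by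
      gcongr with x
      exact_mod_cast hn x
    _ = n * ∫⁻ x, g x ∂μ := lintegral_const_mul _ hg

end TsumTranslates

section FtInd

variable {d : ℕ} {E : Set (Fin d → ℝ)}

theorem ftInd_eq_integral_fourierChar (E : Set (Fin d → ℝ)) (ξ : Fin d → ℝ) :
    ftInd E ξ = ∫ x in E, (𝐞 (∑ j, ξ j * x j) : ℂ) := by
  simp only [ftInd, exp_two_pi_I_mul]

theorem ftInd_zero_right (E : Set (Fin d → ℝ)) : ftInd E 0 = volume.real E := by
  simp [ftInd]

theorem ftInd_eq_fourier (hE : MeasurableSet E) (ξ : Fin d → ℝ) :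
    ftInd E ξ = 𝓕 ((WithLp.ofLp ⁻¹' E).indicator (1 : EuclideanSpace ℝ (Fin d) → ℂ))
      (WithLp.toLp 2 (-ξ)) := by
  rw [ftInd_eq_integral_fourierChar, Real.fourier_eq, ← integral_indicator hE,
    ← (PiLp.volume_preserving_toLp (Fin d)).integral_comp
      (MeasurableEquiv.toLp 2 _).measurableEmbedding]
  refine integral_congr_ae (.of_forall fun x => ?_)
  by_cases hx : x ∈ E <;> simp [hx, Circle.smul_def, PiLp.inner_apply]

theorem continuous_ftInd (hE : MeasurableSet E) (hfin : volume E ≠ ⊤) : Continuous (ftInd E) := by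
  have hint : Integrable ((WithLp.ofLp ⁻¹' E).indicator (1 : EuclideanSpace ℝ (Fin d) → ℂ)) := by
    refine memLp_one_iff_integrable.1 (memLp_indicator_const 1 ?_ 1 (.inr ?_))
    · exact (PiLp.volume_preserving_ofLp (Fin d)).measurable hE
    · rwa [(PiLp.volume_preserving_ofLp (Fin d)).measure_preimage hE.nullMeasurableSet]
  simp_rw [funext (ftInd_eq_fourier hE)]
  exact (VectorFourier.fourierIntegral_continuous Real.continuous_fourierChar
    continuous_inner hint).comp (by fun_prop)

theorem lintegral_enorm_ftInd_sq (hE : MeasurableSet E) (hfin : volume E ≠ ⊤) :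
    ∫⁻ ξ, ‖ftInd E ξ‖ₑ ^ 2 = volume E := by
  have hofLp := PiLp.volume_preserving_ofLp (Fin d)
  have hneg := (PiLp.volume_preserving_toLp (Fin d)).comp
    (Measure.measurePreserving_neg (volume : Measure (Fin d → ℝ)))
  have hE' : MeasurableSet ((WithLp.ofLp : EuclideanSpace ℝ (Fin d) → _) ⁻¹' E) :=
    hofLp.measurable hE
  have hvol := hofLp.measure_preimage hE.nullMeasurableSet
  set χ : EuclideanSpace ℝ (Fin d) → ℂ := (WithLp.ofLp ⁻¹' E).indicator 1
  have hmem (p : ENNReal) : MemLp χ p := memLp_indicator_const p hE' 1 (.inr (hvol.trans_ne hfin))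
  calc
    ∫⁻ ξ, ‖ftInd E ξ‖ₑ ^ 2 = ∫⁻ ξ, ‖𝓕 χ (WithLp.toLp 2 (-ξ))‖ₑ ^ 2 := by
      simp_rw [ftInd_eq_fourier hE, χ]
    _ = ∫⁻ w, ‖𝓕 χ w‖ₑ ^ 2 :=
      hneg.lintegral_comp_emb ((MeasurableEquiv.toLp 2 _).measurableEmbedding.comp
        (MeasurableEquiv.neg _).measurableEmbedding) fun w => ‖𝓕 χ w‖ₑ ^ 2
    _ = ∫⁻ x, ‖χ x‖ₑ ^ 2 :=
      lintegral_enorm_fourier_sq (memLp_one_iff_integrable.1 (hmem 1)) (hmem 2)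
    _ = ∫⁻ x, (WithLp.ofLp ⁻¹' E).indicator 1 x := by
      refine lintegral_congr fun x => ?_
      by_cases hx : x.ofLp ∈ E <;> simp [χ, hx]
    _ = volume E := by rw [lintegral_indicator_one hE', hvol]

theorem SpectralRd.exists_tsum_enorm_sq (h : SpectralRd E) (hpos : volume E ≠ 0)
    (hfin : volume E ≠ ⊤) : ∃ S : Set (Fin d → ℝ), S.Countable ∧
      ∀ᵐ x, ∑' s : S, ‖ftInd E (x - s)‖ₑ ^ 2 = volume E ^ 2 := by
  obtain ⟨S, hSc, hS⟩ := h
  refine ⟨S, hSc, hS.mono fun x hx => ?_⟩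
  -- A non-summable family would have sum `0` by convention, but `|E|² > 0`.
  have hsum : Summable fun s : S => ‖ftInd E (x - s)‖ ^ 2 := by
    by_contra hns
    rw [tsum_eq_zero_of_not_summable hns] at hx
    exact (pow_ne_zero 2 (ENNReal.toReal_ne_zero.2 ⟨hpos, hfin⟩)) hx.symm
  calc
    ∑' s : S, ‖ftInd E (x - s)‖ₑ ^ 2 = ∑' s : S, ENNReal.ofReal (‖ftInd E (x - s)‖ ^ 2) := by
      simp_rw [ENNReal.ofReal_pow (norm_nonneg _), ofReal_norm]
    _ = volume E ^ 2 := by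
      rw [← ENNReal.ofReal_tsum_of_nonneg (fun _ => by positivity) hsum, hx,
        ENNReal.ofReal_pow ENNReal.toReal_nonneg, ENNReal.ofReal_toReal hfin]

theorem SpectralRd.exists_finset (h : SpectralRd E) (hE : MeasurableSet E)
    (hpos : volume E ≠ 0) (hfin : volume E ≠ ⊤) {Q : Set (Fin d → ℝ)} (hQ : MeasurableSet Q)
    {n : ℕ} (hn : n < volume Q * volume E) :
    ∃ u : Fin d → ℝ, ∃ S : Finset (Fin d → ℝ), S.card = n + 1 ∧ (∀ s ∈ S, u + s ∈ Q) ∧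
      ∀ s ∈ S, ∀ s' ∈ S, s ≠ s' → ftInd E (s - s') = 0 := by
  obtain ⟨S, hSc, hS⟩ := h.exists_tsum_enorm_sq hpos hfin
  have hcont : Continuous fun ξ => ‖ftInd E ξ‖ₑ ^ 2 := by
    have := continuous_ftInd hE hfin
    fun_prop
  have h0 : ‖ftInd E 0‖ₑ ^ 2 = volume E ^ 2 := by
    rw [ftInd_zero_right, ← ofReal_norm, Complex.norm_of_nonneg measureReal_nonneg,
      ofReal_measureReal hfin]
  have hlt : n * ∫⁻ ξ, ‖ftInd E ξ‖ₑ ^ 2 < volume Q * volume E ^ 2 := by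
    rw [lintegral_enorm_ftInd_sq hE hfin, sq, ← mul_assoc]
    exact ENNReal.mul_lt_mul_left hpos hfin hn
  obtain ⟨u, hu⟩ := exists_lt_encard_of_ae_tsum_sub_eq hSc hcont.measurable hS hQ hlt
  obtain ⟨F, hFS, hF⟩ := Set.exists_subset_encard_eq (Order.add_one_le_of_lt hu)
  have hFfin : F.Finite := Set.finite_of_encard_eq_coe (k := n + 1) (by exact_mod_cast hF)
  refine ⟨u, hFfin.toFinset, ?_, fun s hs => (hFS (by simpa using hs)).2,
    fun s hs s' hs' hne => ?_⟩
  · rw [hFfin.encard_eq_coe_toFinset_card] at hF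
    exact_mod_cast hF
  · have hzero := eq_zero_of_ae_tsum_sub_le (μ := volume) hcont (by simp)
      (hS.mono fun x hx => (hx.trans h0.symm).le) (hFS (by simpa using hs)).1
      (hFS (by simpa using hs')).1 hne
    simpa using hzero

end FtInd

section Cubes

variable {d : ℕ} {A : Finset (Fin d → ℤ)}

theorem mem_cubes_iff_floor {x : Fin d → ℝ} : x ∈ cubes A ↔ (fun j => ⌊x j⌋) ∈ A := by
  simp only [cubes, Set.mem_ofPred_eq, ← Int.floor_eq_iff, ← funext_iff, exists_eq_right']

theorem exists_tiles_cubes (h : Tiles A) :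
    ∃ T : Set (Fin d → ℝ), ∀ x : Fin d → ℝ, ∃! t, t ∈ T ∧ x - t ∈ cubes A := by
  obtain ⟨T, hT⟩ := h
  refine ⟨(fun t j => (t j : ℝ)) '' T, fun x => ?_⟩
  have hfloor (t : Fin d → ℤ) :
      x - (fun j => (t j : ℝ)) ∈ cubes A ↔ (fun j => ⌊x j⌋) - t ∈ A := by
    simp only [mem_cubes_iff_floor, Pi.sub_apply, Int.floor_sub_intCast]
    rfl
  obtain ⟨t, ⟨htT, htA⟩, huniq⟩ := hT fun j => ⌊x j⌋
  refine ⟨_, ⟨⟨t, htT, rfl⟩, (hfloor t).2 htA⟩, ?_⟩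
  rintro _ ⟨⟨t', ht', rfl⟩, h'⟩
  rw [huniq t' ⟨ht', (hfloor t').1 h'⟩]

theorem cubes_eq_biUnion (A : Finset (Fin d → ℤ)) : cubes A = ⋃ a ∈ A, cubes {a} := by
  ext x
  simp [mem_cubes_iff_floor]

theorem cubes_singleton (a : Fin d → ℤ) :
    cubes {a} = Set.univ.pi fun j => Set.Ico (a j : ℝ) (a j + 1) := by
  ext x
  simp [cubes]

theorem pairwiseDisjoint_cubes_singleton (s : Set (Fin d → ℤ)) :
    s.PairwiseDisjoint fun a => cubes {a} := fun a _ b _ hab =>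
  Set.disjoint_left.2 fun _ ha hb => hab <| by
    rw [mem_cubes_iff_floor, Finset.mem_singleton] at ha hb
    exact ha.symm.trans hb

theorem measurableSet_cubes (A : Finset (Fin d → ℤ)) : MeasurableSet (cubes A) := by
  rw [cubes_eq_biUnion]
  refine Finset.measurableSet_biUnion A fun a _ => ?_
  rw [cubes_singleton]
  exact MeasurableSet.univ_pi fun _ => measurableSet_Ico

theorem volume_cubes (A : Finset (Fin d → ℤ)) : volume (cubes A) = A.card := by
  rw [cubes_eq_biUnion, measure_biUnion_finset (pairwiseDisjoint_cubes_singleton _)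
    fun a _ => measurableSet_cubes _]
  simp [cubes_singleton, volume_pi_pi]

/-- The Fourier transform `x ↦ ∫₀¹ e^{2πixt} dt` of the unit interval. -/
noncomputable def unitIntervalFourier (x : ℝ) : ℂ := ∫ t in (0 : ℝ)..1, (𝐞 (x * t) : ℂ)

theorem unitIntervalFourier_ne_zero {x : ℝ} (hx : |x| < 1) : unitIntervalFourier x ≠ 0 := by
  obtain rfl | hx0 := eq_or_ne x 0
  · simp [unitIntervalFourier]
  have hc : (2 * π * Complex.I * x : ℂ) ≠ 0 := by simp [Real.pi_ne_zero, hx0]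
  have hint : unitIntervalFourier x = ((𝐞 x : ℂ) - 1) / (2 * π * Complex.I * x) := by
    simpa [unitIntervalFourier, ← exp_two_pi_I_mul, mul_assoc] using
      integral_exp_mul_complex (a := 0) (b := 1) hc
  rw [hint]
  refine div_ne_zero (sub_ne_zero.2 fun h => ?_) hc
  obtain ⟨n, rfl⟩ := fourierChar_eq_one_iff.1 (Circle.coe_inj.1 h)
  exact hx0 (by exact_mod_cast Int.abs_lt_one_iff.1 (by exact_mod_cast hx))

theorem setIntegral_Ico_add_one_fourierChar (a x : ℝ) :
    ∫ t in Set.Ico a (a + 1), (𝐞 (x * t) : ℂ) = 𝐞 (x * a) * unitIntervalFourier x := by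
  have hshift := intervalIntegral.integral_comp_add_left (a := 0) (b := 1)
    (fun t => (𝐞 (x * t) : ℂ)) a
  rw [add_zero] at hshift
  rw [integral_Ico_eq_integral_Ioc, ← intervalIntegral.integral_of_le (by linarith), ← hshift,
    unitIntervalFourier, ← intervalIntegral.integral_const_mul]
  simp only [mul_add, AddChar.map_add_eq_mul, Circle.coe_mul]

theorem ftInd_cubes_singleton (a : Fin d → ℤ) (ξ : Fin d → ℝ) :
    ftInd (cubes {a}) ξ = (𝐞 (∑ j, ξ j * a j) : ℂ) * ∏ j, unitIntervalFourier (ξ j) := by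
  simp only [ftInd_eq_integral_fourierChar, coe_fourierChar_sum]
  rw [cubes_singleton, volume_pi, Measure.restrict_pi_pi,
    integral_fintype_prod_eq_prod fun j t => (𝐞 (ξ j * t) : ℂ)]
  simp only [setIntegral_Ico_add_one_fourierChar, Finset.prod_mul_distrib]

theorem ftInd_cubes (A : Finset (Fin d → ℤ)) (ξ : Fin d → ℝ) :
    ftInd (cubes A) ξ = expSum A ξ * ∏ j, unitIntervalFourier (ξ j) := by
  have hint (a : Fin d → ℤ) :
      IntegrableOn (fun x : Fin d → ℝ => (𝐞 (∑ j, ξ j * x j) : ℂ)) (cubes {a}) :=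
    Measure.integrableOn_of_bounded (M := 1) (by simp [volume_cubes])
      (Continuous.aestronglyMeasurable (by fun_prop)) (.of_forall fun x => (Circle.norm_coe _).le)
  rw [ftInd_eq_integral_fourierChar, cubes_eq_biUnion, integral_biUnion_finset A
    (fun a _ => measurableSet_cubes _) (pairwiseDisjoint_cubes_singleton _) fun a _ => hint a]
  simp only [← ftInd_eq_integral_fourierChar, ftInd_cubes_singleton, expSum, Finset.sum_mul]

theorem spectralZd_of_spectralRd_cubes (h : SpectralRd (cubes A)) : SpectralZd A := by
  obtain rfl | hA := A.eq_empty_or_nonempty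
  · exact ⟨∅, rfl, by simp⟩
  have hcard : A.card - 1 + 1 = A.card := Nat.sub_add_cancel hA.card_pos
  have hlt : ((A.card - 1 : ℕ) : ENNReal) <
      volume (cubes {(0 : Fin d → ℤ)}) * volume (cubes A) := by
    rw [volume_cubes, volume_cubes, Finset.card_singleton, Nat.cast_one, one_mul]
    exact_mod_cast Nat.sub_one_lt hA.card_pos.ne'
  obtain ⟨u, S, hS, hSu, horth⟩ := h.exists_finset (measurableSet_cubes A)
    (by simpa [volume_cubes] using hA.ne_empty) (by simp [volume_cubes])
    (measurableSet_cubes {0}) hlt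
  -- The differences of these points lie in `(-1, 1)^d`, where the transform of a cube has no zeros.
  refine spectralZd_iff_expSum.2 ⟨S, hS.trans hcard, fun s hs s' hs' hne => ?_⟩
  have hzero := horth s hs s' hs' hne
  rw [ftInd_cubes] at hzero
  refine (mul_eq_zero.1 hzero).resolve_right
    (Finset.prod_ne_zero_iff.2 fun j _ => unitIntervalFourier_ne_zero ?_)
  have hfloor : ⌊(u + s) j⌋ = ⌊(u + s') j⌋ := by
    have hs0 := mem_cubes_iff_floor.1 (hSu s hs)
    have hs0' := mem_cubes_iff_floor.1 (hSu s' hs')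
    rw [Finset.mem_singleton] at hs0 hs0'
    exact congrFun (hs0.trans hs0'.symm) j
  simpa using Int.abs_sub_lt_one_of_floor_eq_floor hfloor

end Cubes

/-- Theorem `th:last`: For every `d ≥ 5` there is a finite subset of
`ℤ^d` which tiles `ℤ^d` by translations but is not spectral in `ℤ^d`, and a finite union
of unit cubes at integer points of `ℝ^d` which tiles `ℝ^d` by translations but is not a
spectral set; this disproves the "tiling ⇒ spectral" direction of Fuglede's conjecture
in dimensions `d ≥ 5`. -/
theorem stmt19 (d : ℕ) (hd : 5 ≤ d) :
    (∃ A : Finset (Fin d → ℤ),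
      (∃ T : Set (Fin d → ℤ), ∀ x : Fin d → ℤ, ∃! t, t ∈ T ∧ x - t ∈ A) ∧
      ¬ SpectralZd A) ∧
    (∃ A : Finset (Fin d → ℤ),
      (∃ T : Set (Fin d → ℝ), ∀ᵐ x : Fin d → ℝ, ∃! t, t ∈ T ∧ x - t ∈ cubes A) ∧
      ¬ SpectralRd (cubes A)) := by
  obtain ⟨A, htile, hspec⟩ := exists_tiles_not_spectralZd hd
  obtain ⟨T, hT⟩ := exists_tiles_cubes htile
  exact ⟨⟨A, htile, hspec⟩,
    ⟨A, ⟨T, .of_forall hT⟩, fun h => hspec (spectralZd_of_spectralRd_cubes h)⟩⟩
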